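/- Operational decomposition of conditional branching (the equation underlying Closure property 4): for closed pPCF terms ⊢ M : nat, ⊢ P : nat and a term Q with z : nat ⊢ Q : nat, for every n ∈ ℕ: Prob^∞_{if(M,P,z·Q), n̲} = Prob^∞_{M, 0̲} · Prob^∞_{P, n̲} + Σ_{k ≥ 0} Prob^∞_{M, (k+1)̲} · Prob^∞_{Q[z ↦ k̲], n̲}. -/

import Mathlib

open scoped ENNReal
open OmegaCompletePartialOrder

/-! ## Syntax of pPCF (intrinsically typed, de Bruijn presentation) -/

/-- pPCF types: `nat` and function types `t ⇒ u`. -/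
inductive PTy : Type
  | nat : PTy
  | arr : PTy → PTy → PTy
  deriving DecidableEq

/-- Typing contexts. -/
abbrev Ctx := List PTy

/-- Probabilities `κ ∈ [0,1] ∩ ℚ`. -/
def Prb : Type := {q : ℚ // 0 ≤ q ∧ q ≤ 1}

/-- Typed de Bruijn variables. -/
inductive PVar : Ctx → PTy → Type
  | zero {Γ : Ctx} {t : PTy} : PVar (t :: Γ) t
  | succ {Γ : Ctx} {t u : PTy} : PVar Γ t → PVar (u :: Γ) t

/-- Well-typed pPCF terms `Γ ⊢ M : t`: numerals `n̲`, variables, `succ(M)`,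
`if(M, P, z·Q)` (the branch `Q` binds `z : nat`), abstraction `λx^u.M`,
application `(M)N`, `coin(κ)` and `fix(M)`. -/
inductive PTm : Ctx → PTy → Type
  | num {Γ : Ctx} : ℕ → PTm Γ .nat
  | var {Γ : Ctx} {t : PTy} : PVar Γ t → PTm Γ t
  | succ {Γ : Ctx} : PTm Γ .nat → PTm Γ .nat
  | ifz {Γ : Ctx} {t : PTy} : PTm Γ .nat → PTm Γ t → PTm (.nat :: Γ) t → PTm Γ t
  | lam {Γ : Ctx} {u t : PTy} : PTm (u :: Γ) t → PTm Γ (.arr u t)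
  | app {Γ : Ctx} {u t : PTy} : PTm Γ (.arr u t) → PTm Γ u → PTm Γ t
  | coin {Γ : Ctx} : Prb → PTm Γ .nat
  | fix {Γ : Ctx} {t : PTy} : PTm Γ (.arr t t) → PTm Γ t

/-- Type-preserving renamings. -/
def PRen (Γ Δ : Ctx) : Type := ∀ t : PTy, PVar Γ t → PVar Δ t

/-- Lifting a renaming under a binder. -/
def PRen.lift {Γ Δ : Ctx} (r : PRen Γ Δ) (u : PTy) : PRen (u :: Γ) (u :: Δ) :=
  fun _ v =>
    match v with
    | .zero => .zero
    | .succ w => .succ (r _ w)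

/-- Renaming of well-typed terms. -/
def PTm.rename : ∀ {Γ Δ : Ctx} {t : PTy}, PRen Γ Δ → PTm Γ t → PTm Δ t
  | _, _, _, _, .num n => .num n
  | _, _, _, r, .var v => .var (r _ v)
  | _, _, _, r, .succ M => .succ (M.rename r)
  | _, _, _, r, .ifz M P Q => .ifz (M.rename r) (P.rename r) (Q.rename (r.lift _))
  | _, _, _, r, .lam M => .lam (M.rename (r.lift _))
  | _, _, _, r, .app M N => .app (M.rename r) (N.rename r)
  | _, _, _, _, .coin q => .coin q
  | _, _, _, r, .fix M => .fix (M.rename r)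

/-- Type-preserving simultaneous substitutions. -/
def PSub (Γ Δ : Ctx) : Type := ∀ t : PTy, PVar Γ t → PTm Δ t

/-- Lifting a substitution under a binder. -/
def PSub.lift {Γ Δ : Ctx} (σ : PSub Γ Δ) (u : PTy) : PSub (u :: Γ) (u :: Δ) :=
  fun _ v =>
    match v with
    | .zero => .var .zero
    | .succ w => (σ _ w).rename (fun _ x => .succ x)

/-- Capture-avoiding simultaneous substitution on well-typed terms. -/
def PTm.subst : ∀ {Γ Δ : Ctx} {t : PTy}, PSub Γ Δ → PTm Γ t → PTm Δ t
  | _, _, _, _, .num n => .num n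
  | _, _, _, σ, .var v => σ _ v
  | _, _, _, σ, .succ M => .succ (M.subst σ)
  | _, _, _, σ, .ifz M P Q => .ifz (M.subst σ) (P.subst σ) (Q.subst (σ.lift _))
  | _, _, _, σ, .lam M => .lam (M.subst (σ.lift _))
  | _, _, _, σ, .app M N => .app (M.subst σ) (N.subst σ)
  | _, _, _, _, .coin q => .coin q
  | _, _, _, σ, .fix M => .fix (M.subst σ)

/-- The substitution replacing the topmost variable by `N` and lowering the others. -/
def PSub.single {Γ : Ctx} {u : PTy} (N : PTm Γ u) : PSub (u :: Γ) Γ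
  | _, .zero => N
  | _, .succ w => .var w

/-- Substitution `M[x ↦ N]` of the topmost bound variable. -/
def PTm.subst1 {Γ : Ctx} {u t : PTy} (M : PTm (u :: Γ) t) (N : PTm Γ u) : PTm Γ t :=
  M.subst (PSub.single N)

/-- Probability `κ ∈ [0,1]` of a coin, as an element of `[0,1] ⊆ ℝ≥0∞`. -/
noncomputable def Prb.toE (q : Prb) : ℝ≥0∞ := ENNReal.ofReal (q.1 : ℝ)

/-- The complementary probability `1 - κ`. -/
noncomputable def Prb.toE' (q : Prb) : ℝ≥0∞ := ENNReal.ofReal (1 - (q.1 : ℝ))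

/-! ## Operational semantics -/

/-- The probabilistic reduction relation `M →_κ M'` of pPCF; deterministic
reductions `M →_d M'` are those with `κ = 1`. -/
inductive Red : ∀ {Γ : Ctx} {t : PTy}, PTm Γ t → ℝ≥0∞ → PTm Γ t → Prop
  | coin0 {Γ : Ctx} (q : Prb) : Red (Γ := Γ) (.coin q) q.toE (.num 0)
  | coin1 {Γ : Ctx} (q : Prb) : Red (Γ := Γ) (.coin q) q.toE' (.num 1)
  | beta {Γ : Ctx} {u t : PTy} (M : PTm (u :: Γ) t) (N : PTm Γ u) :
      Red (.app (.lam M) N) 1 (M.subst1 N)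
  | fixR {Γ : Ctx} {t : PTy} (M : PTm Γ (.arr t t)) :
      Red (.fix M) 1 (.app M (.fix M))
  | succNum {Γ : Ctx} (n : ℕ) : Red (Γ := Γ) (.succ (.num n)) 1 (.num (n + 1))
  | ifz0 {Γ : Ctx} {t : PTy} (P : PTm Γ t) (Q : PTm (.nat :: Γ) t) :
      Red (.ifz (.num 0) P Q) 1 P
  | ifzS {Γ : Ctx} {t : PTy} (n : ℕ) (P : PTm Γ t) (Q : PTm (.nat :: Γ) t) :
      Red (.ifz (.num (n + 1)) P Q) 1 (Q.subst1 (.num n))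
  | appL {Γ : Ctx} {u t : PTy} {M M' : PTm Γ (.arr u t)} {κ : ℝ≥0∞} (N : PTm Γ u) :
      Red M κ M' → Red (.app M N) κ (.app M' N)
  | succC {Γ : Ctx} {M M' : PTm Γ .nat} {κ : ℝ≥0∞} :
      Red M κ M' → Red (.succ M) κ (.succ M')
  | ifzC {Γ : Ctx} {t : PTy} {M M' : PTm Γ .nat} {κ : ℝ≥0∞}
      (P : PTm Γ t) (Q : PTm (.nat :: Γ) t) :
      Red M κ M' → Red (.ifz M P Q) κ (.ifz M' P Q)

/-- A term is weak-normal when it admits no reduction step. -/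
def WeakNormal {Γ : Ctx} {t : PTy} (M : PTm Γ t) : Prop := ¬ ∃ κ M', Red M κ M'

open Classical in
/-- The matrix of pPCF terms: `Prob M M' = κ` if `M →_κ M'`, `Prob M M = 1` if `M` is
weak-normal, and `0` otherwise. -/
noncomputable def Prob {Γ : Ctx} {t : PTy} (M M' : PTm Γ t) : ℝ≥0∞ :=
  if WeakNormal M ∧ M = M' then 1 else sSup {κ | Red M κ M'}

open Classical in
/-- The `k`-th matrix power `Prob^k` of the matrix of pPCF terms. -/
noncomputable def ProbPow {Γ : Ctx} {t : PTy} : ℕ → PTm Γ t → PTm Γ t → ℝ≥0∞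
  | 0, M, M' => if M = M' then 1 else 0
  | k + 1, M, M' => ∑' N : PTm Γ t, Prob M N * ProbPow k N M'

/-- `Prob^∞ M M' = sup_k Prob^k M M'`, the lub of the probabilities that `M`
reduces to `M'` in finitely many steps. -/
noncomputable def ProbInf {Γ : Ctx} {t : PTy} (M M' : PTm Γ t) : ℝ≥0∞ :=
  ⨆ k : ℕ, ProbPow k M M'

/-!
For a weak-normal `W`, `ProbPow k M W` increases with `k`, so `ProbInf · W` is harmonic for the
chain `Prob` by monotone convergence. As long as `M` is not a numeral, `ifz M P Q` moves exactly as
`M` does, so `M ↦ ProbInf (ifz M P Q) W` is harmonic as well, with value `ProbInf (branch P Q j) W`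
at the numeral `j`. A superharmonic function dominates the average of its values at any absorbing
states the chain may end in, which gives `≥`; an induction on the number of steps of the
conditional gives `≤`.
-/

section ENNRealSums

variable {α β : Type*}

theorem ennreal_tsum_iSup_of_monotone {f : ℕ → α → ℝ≥0∞} (hf : ∀ a, Monotone fun k => f k a) :
    ∑' a, ⨆ k, f k a = ⨆ k, ∑' a, f k a := by
  simp_rw [ENNReal.tsum_eq_iSup_sum, ENNReal.finsetSum_iSup_of_monotone hf]
  exact iSup_comm

theorem ennreal_tsum_tsum_mul_mul (a : α → ℝ≥0∞) (b : α → β → ℝ≥0∞) (c : β → ℝ≥0∞) :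
    ∑' j, (∑' i, a i * b i j) * c j = ∑' i, a i * ∑' j, b i j * c j := by
  simp_rw [← ENNReal.tsum_mul_right, ← ENNReal.tsum_mul_left, mul_assoc]
  exact ENNReal.tsum_comm

end ENNRealSums

section Chain

variable {Γ : Ctx} {t : PTy} {M W : PTm Γ t}

theorem WeakNormal.tsum_prob_mul (hM : WeakNormal M) (f : PTm Γ t → ℝ≥0∞) :
    ∑' N, Prob M N * f N = f M := by
  rw [tsum_eq_single M]
  · simp [Prob, hM]
  · intro N hN
    have hred : ∀ κ, ¬ Red M κ N := fun κ h => hM ⟨κ, N, h⟩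
    simp [Prob, hN.symm, hred]

theorem tsum_prob_mul_of_red_iff {M' : PTm Γ t} (hM : ∀ κ N, Red M κ N ↔ κ = 1 ∧ N = M')
    (f : PTm Γ t → ℝ≥0∞) : ∑' N, Prob M N * f N = f M' := by
  have hnormal : ¬ WeakNormal M := fun h => h ⟨1, M', (hM 1 M').2 ⟨rfl, rfl⟩⟩
  rw [tsum_eq_single M']
  · simp [Prob, hnormal, hM]
  · intro N hN
    simp [Prob, hnormal, hM, hN]

theorem WeakNormal.probPow_self (hW : WeakNormal W) (k : ℕ) : ProbPow k W W = 1 := by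
  induction k with
  | zero => simp [ProbPow]
  | succ k ih => rw [ProbPow, hW.tsum_prob_mul, ih]

theorem WeakNormal.probInf_self (hW : WeakNormal W) : ProbInf W W = 1 := by
  simp [ProbInf, hW.probPow_self]

theorem WeakNormal.monotone_probPow (hW : WeakNormal W) (M : PTm Γ t) :
    Monotone fun k => ProbPow k M W := by
  refine monotone_nat_of_le_succ fun k => ?_
  induction k generalizing M with
  | zero =>
    by_cases h : M = W
    · subst h
      rw [hW.probPow_self, hW.probPow_self]
    · simp [ProbPow, h]
  | succ k ih =>
    rw [ProbPow, ProbPow]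
    gcongr with N
    exact ih N

theorem WeakNormal.probInf_eq_tsum_prob_mul (hW : WeakNormal W) (M : PTm Γ t) :
    ProbInf M W = ∑' N, Prob M N * ProbInf N W := by
  calc ProbInf M W
      = ⨆ k, ProbPow (k + 1) M W := ((hW.monotone_probPow M).iSup_nat_add 1).symm
    _ = ∑' N, ⨆ k, Prob M N * ProbPow k N W :=
        (ennreal_tsum_iSup_of_monotone fun N => (hW.monotone_probPow N).const_mul' _).symm
    _ = ∑' N, Prob M N * ProbInf N W := by simp_rw [ProbInf, ENNReal.mul_iSup]

theorem tsum_probPow_mul_le {g : PTm Γ t → ℝ≥0∞} (hg : ∀ M, ∑' N, Prob M N * g N ≤ g M)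
    (k : ℕ) (M : PTm Γ t) : ∑' N, ProbPow k M N * g N ≤ g M := by
  induction k generalizing M with
  | zero => simp [ProbPow]
  | succ k ih =>
    calc ∑' N, ProbPow (k + 1) M N * g N
        = ∑' N, Prob M N * ∑' N', ProbPow k N N' * g N' := ennreal_tsum_tsum_mul_mul _ _ _
      _ ≤ ∑' N, Prob M N * g N := by
          gcongr with N
          exact ih N
      _ ≤ g M := hg M

theorem tsum_probInf_mul_le {ι : Type*} {V : ι → PTm Γ t} (hV : Function.Injective V)
    (hnormal : ∀ i, WeakNormal (V i)) {g : PTm Γ t → ℝ≥0∞}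
    (hg : ∀ M, ∑' N, Prob M N * g N ≤ g M) (M : PTm Γ t) :
    ∑' i, ProbInf M (V i) * g (V i) ≤ g M := by
  simp_rw [ProbInf, ENNReal.iSup_mul]
  rw [ennreal_tsum_iSup_of_monotone fun i => ((hnormal i).monotone_probPow M).mul_const' _]
  refine iSup_le fun k => ?_
  calc ∑' i, ProbPow k M (V i) * g (V i)
      ≤ ∑' N, ProbPow k M N * g N :=
        ENNReal.tsum_comp_le_tsum_of_injective hV fun N => ProbPow k M N * g N
    _ ≤ g M := tsum_probPow_mul_le hg k M

end Chain

section Conditional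

variable {Γ : Ctx} {t : PTy}

theorem weakNormal_num (j : ℕ) : WeakNormal (.num j : PTm Γ .nat) := by
  rintro ⟨κ, N, h⟩
  cases h

/-- The term to which `if(j̲, P, z·Q)` reduces: `P` if `j = 0`, and `Q[z ↦ i̲]` if `j = i + 1`. -/
def PTm.branch (P : PTm Γ t) (Q : PTm (.nat :: Γ) t) : ℕ → PTm Γ t
  | 0 => P
  | i + 1 => Q.subst1 (.num i)

variable {M : PTm Γ .nat} {P : PTm Γ t} {Q : PTm (.nat :: Γ) t}

theorem red_ifz_num_iff {j : ℕ} {κ : ℝ≥0∞} {N : PTm Γ t} :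
    Red (.ifz (.num j) P Q) κ N ↔ κ = 1 ∧ N = .branch P Q j := by
  constructor
  · intro h
    cases h with
    | ifz0 => exact ⟨rfl, rfl⟩
    | ifzS => exact ⟨rfl, rfl⟩
    | ifzC _ _ h => exact (weakNormal_num j ⟨_, _, h⟩).elim
  · rintro ⟨rfl, rfl⟩
    cases j with
    | zero => exact .ifz0 P Q
    | succ i => exact .ifzS i P Q

theorem red_ifz_iff (hM : ∀ j, M ≠ .num j) {κ : ℝ≥0∞} {N : PTm Γ t} :
    Red (.ifz M P Q) κ N ↔ ∃ M', N = .ifz M' P Q ∧ Red M κ M' := by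
  constructor
  · intro h
    cases h with
    | ifz0 => exact (hM _ rfl).elim
    | ifzS => exact (hM _ rfl).elim
    | ifzC _ _ h => exact ⟨_, rfl, h⟩
  · rintro ⟨M', rfl, h⟩
    exact .ifzC P Q h

theorem weakNormal_ifz_iff (hM : ∀ j, M ≠ .num j) : WeakNormal (.ifz M P Q) ↔ WeakNormal M := by
  simp only [WeakNormal, red_ifz_iff hM]
  grind

theorem prob_ifz_ifz (hM : ∀ j, M ≠ .num j) (M' : PTm Γ .nat) :
    Prob (.ifz M P Q) (.ifz M' P Q) = Prob M M' := by
  classical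
  simp [Prob, weakNormal_ifz_iff hM, red_ifz_iff hM]

theorem prob_ifz_eq_zero (hM : ∀ j, M ≠ .num j) {N : PTm Γ t} (hN : ∀ M', N ≠ .ifz M' P Q) :
    Prob (.ifz M P Q) N = 0 := by
  simp [Prob, red_ifz_iff hM, hN, (hN M).symm]

theorem tsum_prob_ifz_mul (hM : ∀ j, M ≠ .num j) (f : PTm Γ t → ℝ≥0∞) :
    ∑' N, Prob (.ifz M P Q) N * f N = ∑' M', Prob M M' * f (.ifz M' P Q) := by
  have hinj : Function.Injective fun M' => PTm.ifz M' P Q := fun _ _ h => (PTm.ifz.inj h).1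
  have hsupp : (Function.support fun N => Prob (.ifz M P Q) N * f N) ⊆
      Set.range fun M' => PTm.ifz M' P Q := by
    intro N hN
    by_contra hne
    exact hN (by simp [prob_ifz_eq_zero hM fun M' h => hne ⟨M', h.symm⟩])
  simp_rw [← hinj.tsum_eq hsupp, prob_ifz_ifz hM]

variable {W : PTm Γ t}

theorem WeakNormal.probInf_ifz_num (hW : WeakNormal W) (j : ℕ) :
    ProbInf (.ifz (.num j) P Q) W = ProbInf (.branch P Q j) W := by
  rw [hW.probInf_eq_tsum_prob_mul, tsum_prob_mul_of_red_iff fun _ _ => red_ifz_num_iff]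

theorem WeakNormal.tsum_prob_mul_probInf_ifz (hW : WeakNormal W) (M : PTm Γ .nat) :
    ∑' M', Prob M M' * ProbInf (.ifz M' P Q) W = ProbInf (.ifz M P Q) W := by
  by_cases hM : ∃ j, M = .num j
  · obtain ⟨j, rfl⟩ := hM
    exact (weakNormal_num j).tsum_prob_mul _
  · push Not at hM
    rw [hW.probInf_eq_tsum_prob_mul (.ifz M P Q), tsum_prob_ifz_mul hM]

theorem tsum_probInf_mul_probInf_branch_le (hW : WeakNormal W) :
    ∑' j, ProbInf M (.num j) * ProbInf (.branch P Q j) W ≤ ProbInf (.ifz M P Q) W := by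
  have hinj : Function.Injective (PTm.num : ℕ → PTm Γ .nat) := fun _ _ => PTm.num.inj
  simpa only [hW.probInf_ifz_num] using
    tsum_probInf_mul_le hinj weakNormal_num (fun M => (hW.tsum_prob_mul_probInf_ifz M).le) M

theorem tsum_prob_mul_tsum_probInf_num_mul (M : PTm Γ .nat) (c : ℕ → ℝ≥0∞) :
    ∑' N, Prob M N * ∑' j, ProbInf N (.num j) * c j = ∑' j, ProbInf M (.num j) * c j := by
  simp_rw [(weakNormal_num _).probInf_eq_tsum_prob_mul M, ennreal_tsum_tsum_mul_mul]

theorem probPow_ifz_le (hW : WeakNormal W) (hifz : ∀ M', W ≠ .ifz M' P Q) (k : ℕ)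
    (M : PTm Γ .nat) :
    ProbPow k (.ifz M P Q) W ≤ ∑' j, ProbInf M (.num j) * ProbInf (.branch P Q j) W := by
  induction k generalizing M with
  | zero => simp [ProbPow, (hifz M).symm]
  | succ k ih =>
    by_cases hM : ∃ j, M = .num j
    · obtain ⟨j, rfl⟩ := hM
      calc ProbPow (k + 1) (.ifz (.num j) P Q) W
          ≤ ProbInf (.ifz (.num j) P Q) W := le_iSup (fun k => ProbPow k _ W) (k + 1)
        _ = ProbInf (.num j : PTm Γ .nat) (.num j) * ProbInf (.branch P Q j) W := by
            rw [hW.probInf_ifz_num, (weakNormal_num j).probInf_self, one_mul]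
        _ ≤ _ := ENNReal.le_tsum j
    · push Not at hM
      calc ProbPow (k + 1) (.ifz M P Q) W
          = ∑' M', Prob M M' * ProbPow k (.ifz M' P Q) W := tsum_prob_ifz_mul hM _
        _ ≤ ∑' M', Prob M M' * ∑' j, ProbInf M' (.num j) * ProbInf (.branch P Q j) W := by
            gcongr with M'
            exact ih M'
        _ = _ := tsum_prob_mul_tsum_probInf_num_mul M _

end Conditional

theorem probInf_ifz_general {Γ : Ctx} {t : PTy} (M : PTm Γ .nat) (P : PTm Γ t)
    (Q : PTm (.nat :: Γ) t) {W : PTm Γ t} (hW : WeakNormal W) (hifz : ∀ M', W ≠ .ifz M' P Q) :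
    ProbInf (.ifz M P Q) W =
      ProbInf M (.num 0) * ProbInf P W +
        ∑' k : ℕ, ProbInf M (.num (k + 1)) * ProbInf (Q.subst1 (.num k)) W := by
  calc ProbInf (.ifz M P Q) W
      = ∑' j, ProbInf M (.num j) * ProbInf (.branch P Q j) W :=
        le_antisymm (iSup_le fun k => probPow_ifz_le hW hifz k M)
          (tsum_probInf_mul_probInf_branch_le hW)
    _ = _ := tsum_eq_zero_add' ENNReal.summable

/-- Operational decomposition of conditional branching (the equation underlying
Closure property 4): for closed terms `⊢ M : nat`, `⊢ P : nat` and `z : nat ⊢ Q : nat`,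
for every `n ∈ ℕ`,
`Prob^∞_{if(M,P,z·Q), n̲} = Prob^∞_{M,0̲} · Prob^∞_{P,n̲}
  + ∑_{k≥0} Prob^∞_{M,(k+1)̲} · Prob^∞_{Q[z↦k̲],n̲}`. -/
theorem probInf_ifz (M : PTm [] .nat) (P : PTm [] .nat) (Q : PTm [.nat] .nat) (n : ℕ) :
    ProbInf (.ifz M P Q) (.num n) =
      ProbInf M (.num 0) * ProbInf P (.num n) +
        ∑' k : ℕ, ProbInf M (.num (k + 1)) * ProbInf (Q.subst1 (.num k)) (.num n) :=
  probInf_ifz_general M P Q (weakNormal_num n) nofun
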